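/- Let Λ ⊂ ℝ^n be a full-rank lattice and σ_s > 0. For t ∈ ℝ^n define m(t) = E_{X ~ D_{Λ+t, σ_s}}[‖X‖²]/σ_s² = (Σ_{y ∈ Λ+t} ‖y/σ_s‖² f_{σ_s}(y))/f_{σ_s}(Λ+t). Then for every ε > 0, the set {t ∈ ℝ^n : m(t) ≥ (1+ε)n} has measure at most exp(−(ε²/4 − ε³/6)·n) under the Gaussian measure N(0, σ_s² I_n). -/

import Mathlib

open MeasureTheory Real Filter Pointwise
open scoped ENNReal RealInnerProductSpace

noncomputable section

/-- The (continuous) Gaussian density with parameter `σ` on `ℝⁿ`: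
`f_σ(x) = (2πσ²)^{-n/2} exp(-‖x‖²/(2σ²))`. -/
def gaussF (n : ℕ) (σ : ℝ) (x : EuclideanSpace ℝ (Fin n)) : ℝ :=
  (2 * π * σ ^ 2) ^ (-(n : ℝ) / 2) * Real.exp (-‖x‖ ^ 2 / (2 * σ ^ 2))

/-- The Gaussian mass `f_σ(S) = Σ_{y ∈ S} f_σ(y)` of a (countable) set `S ⊆ ℝⁿ`. -/
def gaussMass (n : ℕ) (σ : ℝ) (S : Set (EuclideanSpace ℝ (Fin n))) : ℝ :=
  ∑' y : S, gaussF n σ y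

/-- The Gaussian measure `N(0, σ² Iₙ)` on `ℝⁿ`, given by its density w.r.t. Lebesgue measure. -/
def gaussMeasure (n : ℕ) (σ : ℝ) : Measure (EuclideanSpace ℝ (Fin n)) :=
  volume.withDensity fun x => ENNReal.ofReal (gaussF n σ x)

/-- The coset `S + t` of a set `S ⊆ ℝⁿ`, i.e. `{x | x - t ∈ S}`. -/
def coset (n : ℕ) (S : Set (EuclideanSpace ℝ (Fin n))) (t : EuclideanSpace ℝ (Fin n)) :
    Set (EuclideanSpace ℝ (Fin n)) := {x | x - t ∈ S}

/-- The Voronoi cell of `S`: `{x | ⟪x,y⟫ ≤ ‖y‖²/2 for all y ∈ S}`. -/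
def voronoi (n : ℕ) (S : Set (EuclideanSpace ℝ (Fin n))) : Set (EuclideanSpace ℝ (Fin n)) :=
  {x | ∀ y ∈ S, ⟪x, y⟫ ≤ ‖y‖ ^ 2 / 2}

/-- The inverse error function `err⁻¹_ε(Λ)`: the least `s > 0` such that a standard Gaussian
leaves `s · V(Λ)` with probability at most `ε`. -/
def errInv (n : ℕ) (ε : ℝ) (S : Set (EuclideanSpace ℝ (Fin n))) : ℝ :=
  sInf {s : ℝ | 0 < s ∧ gaussMeasure n 1 ((s • voronoi n S)ᶜ) ≤ ENNReal.ofReal ε}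

/-- The Shannon entropy (in nats) of the discrete Gaussian `D_{S,σ}` supported on `S`,
which assigns mass `f_σ(y)/f_σ(S)` to each `y ∈ S`. -/
def dgEntropy (n : ℕ) (σ : ℝ) (S : Set (EuclideanSpace ℝ (Fin n))) : ℝ :=
  -∑' y : S, (gaussF n σ y / gaussMass n σ S) * Real.log (gaussF n σ y / gaussMass n σ S)

/-- The flatness factor `ε_Λ(σ) = sup_{x ∈ V(Λ)} |V(Λ)·f_σ(Λ+x) − 1|`. -/
def flatness (n : ℕ) (L : Submodule ℤ (EuclideanSpace ℝ (Fin n))) (σ : ℝ) : ℝ :=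
  ⨆ x : voronoi n (L : Set (EuclideanSpace ℝ (Fin n))),
    |ZLattice.covolume L volume *
        gaussMass n σ (coset n (L : Set (EuclideanSpace ℝ (Fin n))) x) - 1|

/-- Unfolding over a fundamental domain of the lattice. -/
lemma unfold_le {n : ℕ} (L : Submodule ℤ (EuclideanSpace ℝ (Fin n)))
    [DiscreteTopology L] [IsZLattice ℝ L] (u w : EuclideanSpace ℝ (Fin n) → ℝ≥0∞)
    (hu : Measurable u) (hw : Measurable w) (C : ℝ≥0∞) (A : Set (EuclideanSpace ℝ (Fin n)))
    (hA : ∀ t ∈ A, ∑' y : L, u (y + t) ≤ C * ∑' y : L, w (y + t)) :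
    ∫⁻ t in A, u t ≤ C * ∫⁻ t, w t := by
  have : MeasurableVAdd L (EuclideanSpace ℝ (Fin n)) :=
    (inferInstance : MeasurableVAdd L.toAddSubgroup (EuclideanSpace ℝ (Fin n)))
  have : VAddInvariantMeasure L (EuclideanSpace ℝ (Fin n)) volume :=
    (inferInstance : VAddInvariantMeasure L.toAddSubgroup (EuclideanSpace ℝ (Fin n)) volume)
  have hF := ZLattice.isAddFundamentalDomain (Module.Free.chooseBasis ℤ L)
    (volume : Measure (EuclideanSpace ℝ (Fin n)))
  set F := ZSpan.fundamentalDomain ((Module.Free.chooseBasis ℤ L).ofZLatticeBasis ℝ L)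
  have hm : ∀ f : EuclideanSpace ℝ (Fin n) → ℝ≥0∞, Measurable f →
      Measurable fun t => ∑' y : L, f (y + t) := fun f hf =>
    Measurable.ennreal_tsum fun y => hf.comp (measurable_const_add _)
  have hswap : ∀ f : EuclideanSpace ℝ (Fin n) → ℝ≥0∞, Measurable f →
      ∫⁻ t in F, ∑' y : L, f (y + t) = ∑' y : L, ∫⁻ t in F, f (y +ᵥ t) := fun f hf =>
    lintegral_tsum (f := fun (y : L) t => f (y + t))
      fun y => (hf.comp (measurable_const_add _)).aemeasurable
  set B : Set (EuclideanSpace ℝ (Fin n)) :=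
    {t | ∑' y : L, u (y + t) ≤ C * ∑' y : L, w (y + t)} with hB
  have hBm : MeasurableSet B := measurableSet_le (hm u hu) ((hm w hw).const_mul C)
  have hinv : ∀ (f : EuclideanSpace ℝ (Fin n) → ℝ≥0∞) (z : L) (t : EuclideanSpace ℝ (Fin n)),
      ∑' y : L, f (y + (z + t)) = ∑' y : L, f (y + t) := by
    intro f z t
    rw [← (Equiv.addRight z).tsum_eq (fun y : L => f (y + t))]
    refine tsum_congr fun y => ?_
    simp [add_assoc]
  have hBinv : ∀ (z : L) (t : EuclideanSpace ℝ (Fin n)), (z : EuclideanSpace ℝ (Fin n)) + t ∈ B ↔ t ∈ B := by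
    intro z t
    simp only [hB, Set.mem_setOf_eq, hinv]
  calc ∫⁻ t in A, u t ≤ ∫⁻ t in B, u t := lintegral_mono_set hA
    _ = ∫⁻ t, B.indicator u t := (lintegral_indicator hBm u).symm
    _ = ∑' y : L, ∫⁻ t in F, B.indicator u (y +ᵥ t) := hF.lintegral_eq_tsum'' _
    _ = ∫⁻ t in F, ∑' y : L, B.indicator u (y + t) := by
        exact (hswap _ (hu.indicator hBm)).symm
    _ ≤ ∫⁻ t in F, C * ∑' y : L, w (y + t) := by
        refine lintegral_mono fun t => ?_
        by_cases ht : t ∈ B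
        · have : ∀ y : L, B.indicator u (y + t) = u (y + t) := fun y =>
            Set.indicator_of_mem ((hBinv y t).2 ht) u
          simp only [this]
          exact ht
        · have : ∀ y : L, B.indicator u (y + t) = 0 := fun y =>
            Set.indicator_of_notMem (fun h => ht ((hBinv y t).1 h)) u
          simp [this]
    _ = C * ∫⁻ t in F, ∑' y : L, w (y + t) := lintegral_const_mul _ (hm w hw)
    _ = C * ∑' y : L, ∫⁻ t in F, w (y +ᵥ t) := by
        rw [hswap w hw]
    _ = C * ∫⁻ t, w t := by rw [← hF.lintegral_eq_tsum'']

/-- Jensen's inequality through the tangent line, for weighted sums. -/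
lemma jensen_tsum {ι : Type*} [Nonempty ι] (g h : ι → ℝ) (hg : ∀ i, 0 < g i) (hh : ∀ i, 0 ≤ h i)
    (l c : ℝ) (hl : 0 < l) (hc : c ≤ (∑' i, h i * g i) / ∑' i, g i) :
    ∑' i, ENNReal.ofReal (g i) ≤
      ENNReal.ofReal (Real.exp (-(l * c))) * ∑' i, ENNReal.ofReal (Real.exp (l * h i) * g i) := by
  have hwpos : ∀ i, 0 ≤ Real.exp (l * h i) * g i := fun i => by have := hg i; positivity
  by_cases hs : Summable fun i => Real.exp (l * h i) * g i
  swap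
  · have : ∑' i, ENNReal.ofReal (Real.exp (l * h i) * g i) = ⊤ := by
      by_contra hne
      apply hs
      have := ENNReal.summable_toReal hne
      refine this.congr fun i => ?_
      rw [ENNReal.toReal_ofReal (hwpos i)]
    rw [this, ENNReal.mul_top]
    · exact le_top
    · simp [Real.exp_pos]
  have hsg : Summable g := by
    refine Summable.of_nonneg_of_le (fun i => (hg i).le) (fun i => ?_) hs
    have : 1 ≤ Real.exp (l * h i) := Real.one_le_exp (mul_nonneg hl.le (hh i))
    nlinarith [hg i]
  have hshg : Summable fun i => h i * g i := by
    refine Summable.of_nonneg_of_le (fun i => mul_nonneg (hh i) (hg i).le) (fun i => ?_)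
      (hs.mul_left l⁻¹)
    have h1 : l * h i ≤ Real.exp (l * h i) := by linarith [Real.add_one_le_exp (l * h i)]
    have h2 : h i = l⁻¹ * (l * h i) := by field_simp
    calc h i * g i = l⁻¹ * ((l * h i) * g i) := by field_simp
      _ ≤ _ := by
        have := hg i
        gcongr
  have hG : 0 < ∑' i, g i := hsg.tsum_pos (fun i => (hg i).le) (Classical.arbitrary ι) (hg _)
  rw [le_div_iff₀ hG] at hc
  rw [← ENNReal.ofReal_tsum_of_nonneg (fun i => (hg i).le) hsg,
    ← ENNReal.ofReal_tsum_of_nonneg hwpos hs, ← ENNReal.ofReal_mul (Real.exp_pos _).le]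
  apply ENNReal.ofReal_le_ofReal
  rw [← tsum_mul_left]
  have key : ∑' i, ((1 - l * c) * g i + l * (h i * g i)) ≤
      ∑' i, Real.exp (-(l * c)) * (Real.exp (l * h i) * g i) := by
    refine Summable.tsum_le_tsum (fun i => ?_)
      ((hsg.mul_left _).add (hshg.mul_left _)) (hs.mul_left _)
    rw [← mul_assoc (Real.exp _), ← Real.exp_add]
    have := Real.add_one_le_exp (-(l * c) + l * h i)
    nlinarith [hg i]
  rw [(hsg.mul_left _).tsum_add (hshg.mul_left _), tsum_mul_left, tsum_mul_left] at key
  nlinarith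

lemma log_bound (x : ℝ) (hx : 0 ≤ x) : Real.log (1 + x) ≤ x - x ^ 2 / 2 + x ^ 3 / 3 := by
  have hd : ∀ y ∈ Set.Ici (0 : ℝ), HasDerivAt
      (fun y : ℝ => y - y ^ 2 / 2 + y ^ 3 / 3 - Real.log (1 + y)) (y ^ 3 / (1 + y)) y := by
    intro y hy
    have hy' : (0 : ℝ) ≤ y := hy
    have h1 : (1 + y) ≠ 0 := by positivity
    have := (((hasDerivAt_id y).sub ((hasDerivAt_pow 2 y).div_const 2)).add
      ((hasDerivAt_pow 3 y).div_const 3)).sub (((hasDerivAt_id y).const_add 1).log h1)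
    convert! this using 1
    simp only [id]
    field_simp
    ring
  have hmono : MonotoneOn (fun y : ℝ => y - y ^ 2 / 2 + y ^ 3 / 3 - Real.log (1 + y))
      (Set.Ici 0) := by
    refine monotoneOn_of_deriv_nonneg (convex_Ici 0)
      (fun y hy => (hd y hy).continuousAt.continuousWithinAt)
      (fun y hy => (hd y (interior_subset hy)).differentiableAt.differentiableWithinAt)
      fun y hy => ?_
    have hy' : (0 : ℝ) ≤ y := interior_subset hy
    rw [(hd y hy').deriv]
    positivity
  have := hmono (Set.mem_Ici.2 le_rfl) (Set.mem_Ici.2 hx) hx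
  simp at this
  linarith

lemma gaussF_pos (n : ℕ) (σ : ℝ) (hσ : 0 < σ) (x : EuclideanSpace ℝ (Fin n)) :
    0 < gaussF n σ x := by
  unfold gaussF
  positivity

lemma gaussF_cont (n : ℕ) (σ : ℝ) : Continuous (gaussF n σ) := by
  unfold gaussF
  fun_prop

lemma tilted_lintegral (n : ℕ) (σ : ℝ) (hσ : 0 < σ) (ε : ℝ) (hε : 0 < ε) :
    ∫⁻ x : EuclideanSpace ℝ (Fin n),
      ENNReal.ofReal (Real.exp (ε / (2 * (1 + ε)) * (‖x‖ ^ 2 / σ ^ 2)) * gaussF n σ x) =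
    ENNReal.ofReal ((1 + ε) ^ ((n : ℝ) / 2)) := by
  have hb : 0 < 1 / (2 * σ ^ 2 * (1 + ε)) := by positivity
  have heq : ∀ x : EuclideanSpace ℝ (Fin n),
      Real.exp (ε / (2 * (1 + ε)) * (‖x‖ ^ 2 / σ ^ 2)) * gaussF n σ x =
      (2 * π * σ ^ 2) ^ (-(n : ℝ) / 2) *
        Real.exp (-(1 / (2 * σ ^ 2 * (1 + ε))) * ‖x‖ ^ 2) := by
    intro x
    unfold gaussF
    rw [mul_left_comm, ← Real.exp_add]
    congr 2
    field_simp
    ring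
  have hgval := GaussianFourier.integral_rexp_neg_mul_sq_norm
    (V := EuclideanSpace ℝ (Fin n)) hb
  have hI : Integrable fun x : EuclideanSpace ℝ (Fin n) =>
      Real.exp (-(1 / (2 * σ ^ 2 * (1 + ε))) * ‖x‖ ^ 2) := by
    refine Integrable.of_integral_ne_zero ?_
    rw [hgval]
    positivity
  simp only [heq]
  rw [← ofReal_integral_eq_lintegral_ofReal (hI.const_mul _)
    (Filter.Eventually.of_forall fun x => by positivity), integral_const_mul, hgval]
  congr 1
  have h1 : π / (1 / (2 * σ ^ 2 * (1 + ε))) = (2 * π * σ ^ 2) * (1 + ε) := by field_simp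
  rw [h1, finrank_euclideanSpace_fin, Real.mul_rpow (x := 2 * π * σ ^ 2) (y := 1 + ε) (by positivity) (by positivity), ← mul_assoc,
    ← Real.rpow_add (by positivity)]
  rw [neg_div, neg_add_cancel, Real.rpow_zero, one_mul]

/-- upper tail bound for the normalized expected power
`m(t) = E_{X ~ D_{Λ+t,σ_s}}[‖X‖²]/σ_s²` of the dithered discrete Gaussian. -/
theorem power_upper_tail (n : ℕ) (L : Submodule ℤ (EuclideanSpace ℝ (Fin n)))
    [DiscreteTopology L] [IsZLattice ℝ L]
    (σs : ℝ) (hσs : 0 < σs) (ε : ℝ) (hε : 0 < ε) :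
    gaussMeasure n σs {t : EuclideanSpace ℝ (Fin n) |
      (1 + ε) * n ≤
        (∑' y : coset n (L : Set (EuclideanSpace ℝ (Fin n))) t,
            (‖(y : EuclideanSpace ℝ (Fin n))‖ ^ 2 / σs ^ 2) * gaussF n σs y) /
          gaussMass n σs (coset n (L : Set (EuclideanSpace ℝ (Fin n))) t)}
      ≤ ENNReal.ofReal (Real.exp (-(ε ^ 2 / 4 - ε ^ 3 / 6) * n)) := by
  set l : ℝ := ε / (2 * (1 + ε)) with hl
  have hlpos : 0 < l := by positivity
  unfold gaussMeasure
  rw [withDensity_apply']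
  refine (unfold_le L _
    (fun x => ENNReal.ofReal (Real.exp (l * (‖x‖ ^ 2 / σs ^ 2)) * gaussF n σs x))
    (gaussF_cont n σs).measurable.ennreal_ofReal ?_
    (ENNReal.ofReal (Real.exp (-(l * ((1 + ε) * n))))) _ ?_).trans ?_
  · have := gaussF_cont n σs
    exact (by fun_prop : Continuous fun x : EuclideanSpace ℝ (Fin n) =>
      Real.exp (l * (‖x‖ ^ 2 / σs ^ 2)) * gaussF n σs x).measurable.ennreal_ofReal
  · intro t ht
    let e : coset n (L : Set (EuclideanSpace ℝ (Fin n))) t ≃ L :=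
      { toFun := fun y => ⟨y.1 - t, y.2⟩
        invFun := fun z => ⟨z.1 + t, by simp [coset]⟩
        left_inv := fun y => by simp
        right_inv := fun z => by simp }
    have : Nonempty (coset n (L : Set (EuclideanSpace ℝ (Fin n))) t) := ⟨e.symm 0⟩
    have := jensen_tsum
      (fun y : coset n (L : Set (EuclideanSpace ℝ (Fin n))) t => gaussF n σs y)
      (fun y => ‖(y : EuclideanSpace ℝ (Fin n))‖ ^ 2 / σs ^ 2)
      (fun y => gaussF_pos n σs hσs y) (fun y => by positivity) l ((1 + ε) * n) hlpos ht
    rw [← e.symm.tsum_eq, ← e.symm.tsum_eq (fun y => ENNReal.ofReal (_ * _))] at this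
    exact this
  · rw [hl, tilted_lintegral n σs hσs ε hε, ← ENNReal.ofReal_mul (Real.exp_pos _).le]
    apply ENNReal.ofReal_le_ofReal
    rw [Real.rpow_def_of_pos (by positivity), ← Real.exp_add]
    apply Real.exp_le_exp.2
    have h1 : ε / (2 * (1 + ε)) * ((1 + ε) * n) = ε / 2 * n := by field_simp
    rw [h1]
    have := mul_le_mul_of_nonneg_right (log_bound ε hε.le) (Nat.cast_nonneg (α := ℝ) n)
    nlinarith
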